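/- Descent lemma: assume the bounded-data assumption and consider gradient descent θ̃^(k+1) = θ̃^(k) − η∇L̂(θ̃^(k)) on the logistic empirical risk of the multi-head attention model. For any iteration k ≥ 0, if the step size satisfies η ≤ 1/ρ_k with ρ_k := max{β2(θ̃^(k)), β2(θ̃^(k+1))}, where β2(θ̃) := β3(θ̃)/√H + β1(θ̃)²/4, β1(θ̃) := √T R (2R² ‖θ̃‖_{2,∞} + 1), β3(θ̃) := 2 d √(T d) R³ (3 √d R² ‖θ̃‖_{2,∞} + 1), then L̂(θ̃^(k+1)) ≤ L̂(θ̃^(k)) − (η/2) ‖∇L̂(θ̃^(k))‖². -/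

import Mathlib

/-!
Along the segment from `θ̃^(k)` to `θ̃^(k+1)` the second derivative of the risk is at most
`ρ_k ‖θ̃^(k+1) - θ̃^(k)‖²`; a second-order Taylor bound with `η ρ_k ≤ 1` then gives the descent.

All derivatives are taken along lines `s ↦ θ + s • v`, with bounds packaged in `C2Bound`. If
`p(s)` is a softmax with logits `a + s z`, then `p' = p (z - z̄)` with `z̄ = ∑ pᵢ zᵢ`, so the first
two derivatives of `∑ pᵢ (bᵢ + s cᵢ)` are averages of quantities controlled by the sup norms of
`z`, `c` and `b + s c` (`smax_C2Bound`). Cauchy–Schwarz over tokens (`attnPhi_C2Bound`) and heads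
(`mhPhi_C2Bound`) bounds the two derivatives of the model by `β₁ ‖v‖` and `β₃ / √H ‖v‖²`. The
logistic loss has `|ℓ'| ≤ 1` and `|ℓ''| ≤ 1/4`, so the second derivative of the risk is at most
`β₂ ‖v‖²` (`empLoss_C2Bound`). Finally `β₂` is monotone in the convex function `‖·‖_{2,∞}`, so on
the segment it is at most its value at one of the endpoints (`maxHeadNorm_segment`, `beta2_mono`).
-/

open Finset
open scoped RealInnerProductSpace

/-- The softmax map `φ : ℝ^T → ℝ^T`, `φ(v)_t = exp(v_t) / Σ_s exp(v_s)`. -/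
noncomputable def smax {T : ℕ} (v : Fin T → ℝ) : Fin T → ℝ :=
  fun t => Real.exp (v t) / ∑ s, Real.exp (v s)

/-- The softmax logits: the `(t, s)` entry of `X W Xᵀ`, i.e. `xₜᵀ W x_s`. -/
noncomputable def attnScores {T d : ℕ} (X : Fin T → Fin d → ℝ)
    (W : Fin d → Fin d → ℝ) (t : Fin T) : Fin T → ℝ :=
  fun s => ∑ j, ∑ k, X t j * W j k * X s k

/-- The single-head attention model `Φ(X; U, W) = ⟨U, φ(X W Xᵀ) X⟩`. -/
noncomputable def attnPhi {T d : ℕ} (X U : Fin T → Fin d → ℝ)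
    (W : Fin d → Fin d → ℝ) : ℝ :=
  ∑ t, ∑ t', smax (attnScores X W t) t' * ∑ j, U t j * X t' j

/-- Index set for the parameters `θ_h = concat(U_h, W_h) ∈ ℝ^{Td + d²}` of one head. -/
abbrev HeadIx (T d : ℕ) := (Fin T × Fin d) ⊕ (Fin d × Fin d)

/-- Parameter space `ℝ^{H(Td + d²)}` of the `H`-head model, with Euclidean norm. -/
abbrev Params (T d H : ℕ) := EuclideanSpace ℝ (Fin H × HeadIx T d)

/-- The matrix `U_h` of the `h`-th head. -/
noncomputable def headU {T d H : ℕ} (θ : Params T d H) (h : Fin H) :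
    Fin T → Fin d → ℝ := fun t j => θ (h, Sum.inl (t, j))

/-- The matrix `W_h` of the `h`-th head. -/
noncomputable def headW {T d H : ℕ} (θ : Params T d H) (h : Fin H) :
    Fin d → Fin d → ℝ := fun j k => θ (h, Sum.inr (j, k))

/-- The multi-head attention model `Φ̃(X; θ̃) = (1/√H) Σ_h Φ(X; U_h, W_h)`. -/
noncomputable def mhPhi {T d H : ℕ} (X : Fin T → Fin d → ℝ) (θ : Params T d H) : ℝ :=
  (1 / Real.sqrt H) * ∑ h, attnPhi X (headU θ h) (headW θ h)

/-- The logistic empirical risk `L̂(θ̃) = (1/n) Σᵢ log(1 + exp(−yᵢ Φ̃(Xᵢ; θ̃)))`. -/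
noncomputable def empLoss {T d H n : ℕ} (X : Fin n → Fin T → Fin d → ℝ)
    (y : Fin n → ℝ) (θ : Params T d H) : ℝ :=
  (1 / (n : ℝ)) * ∑ i, Real.log (1 + Real.exp (-(y i * mhPhi (X i) θ)))

/-- `‖θ̃‖_{2,∞} = max_h ‖θ_h‖`: the maximum Euclidean norm over heads. -/
noncomputable def maxHeadNorm {T d H : ℕ} (θ : Params T d H) : ℝ :=
  ⨆ h : Fin H, Real.sqrt (∑ p : HeadIx T d, θ (h, p) ^ 2)

/-- Bounded-data assumption: `R ≥ 1`, labels in `{±1}`, and every token has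
Euclidean norm at most `R`. -/
def BoundedData {T d n : ℕ} (X : Fin n → Fin T → Fin d → ℝ)
    (y : Fin n → ℝ) (R : ℝ) : Prop :=
  1 ≤ R ∧ (∀ i, y i = 1 ∨ y i = -1) ∧
    ∀ i t, Real.sqrt (∑ j, X i t j ^ 2) ≤ R

/-- `β₁(θ̃) = √T R (2R² ‖θ̃‖_{2,∞} + 1)`. -/
noncomputable def beta1 {T d H : ℕ} (R : ℝ) (θ : Params T d H) : ℝ :=
  Real.sqrt T * R * (2 * R ^ 2 * maxHeadNorm θ + 1)

/-- `β₃(θ̃) = 2 d √(T d) R³ (3 √d R² ‖θ̃‖_{2,∞} + 1)`. -/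
noncomputable def beta3 {T d H : ℕ} (R : ℝ) (θ : Params T d H) : ℝ :=
  2 * (d : ℝ) * Real.sqrt ((T : ℝ) * d) * R ^ 3 *
    (3 * Real.sqrt d * R ^ 2 * maxHeadNorm θ + 1)

/-- `β₂(θ̃) = β₃(θ̃)/√H + β₁(θ̃)²/4`, the local smoothness parameter. -/
noncomputable def beta2 {T d H : ℕ} (R : ℝ) (θ : Params T d H) : ℝ :=
  beta3 R θ / Real.sqrt H + beta1 R θ ^ 2 / 4

/-! ### Twice differentiable functions of one variable -/

/-- `q` is twice differentiable, with `|q'(s)| ≤ a s` and `|q''(s)| ≤ b s` for all `s`. -/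
def C2Bound (q a b : ℝ → ℝ) : Prop :=
  ∃ q1 q2 : ℝ → ℝ, (∀ s, HasDerivAt q (q1 s) s) ∧ (∀ s, HasDerivAt q1 (q2 s) s) ∧
    ∀ s, |q1 s| ≤ a s ∧ |q2 s| ≤ b s

lemma C2Bound.mono {q a b a' b' : ℝ → ℝ} (h : C2Bound q a b) (ha : ∀ s, a s ≤ a' s)
    (hb : ∀ s, b s ≤ b' s) : C2Bound q a' b' := by
  obtain ⟨q1, q2, h1, h2, h3⟩ := h
  exact ⟨q1, q2, h1, h2, fun s => ⟨(h3 s).1.trans (ha s), (h3 s).2.trans (hb s)⟩⟩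

lemma C2Bound.sum {ι : Type*} [Fintype ι] {q a b : ι → ℝ → ℝ}
    (h : ∀ i, C2Bound (q i) (a i) (b i)) :
    C2Bound (fun s => ∑ i, q i s) (fun s => ∑ i, a i s) (fun s => ∑ i, b i s) := by
  choose q1 q2 h1 h2 h3 using h
  refine ⟨fun s => ∑ i, q1 i s, fun s => ∑ i, q2 i s, fun s => ?_, fun s => ?_, fun s => ⟨?_, ?_⟩⟩
  · exact HasDerivAt.fun_sum fun i _ => h1 i s
  · exact HasDerivAt.fun_sum fun i _ => h2 i s
  · exact (abs_sum_le_sum_abs _ _).trans (sum_le_sum fun i _ => (h3 i s).1)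
  · exact (abs_sum_le_sum_abs _ _).trans (sum_le_sum fun i _ => (h3 i s).2)

lemma C2Bound.const_mul {q a b : ℝ → ℝ} (c : ℝ) (h : C2Bound q a b) :
    C2Bound (fun s => c * q s) (fun s => |c| * a s) (fun s => |c| * b s) := by
  obtain ⟨q1, q2, h1, h2, h3⟩ := h
  refine ⟨fun s => c * q1 s, fun s => c * q2 s, fun s => (h1 s).const_mul c,
    fun s => (h2 s).const_mul c, fun s => ⟨?_, ?_⟩⟩
  · rw [abs_mul]; exact mul_le_mul_of_nonneg_left (h3 s).1 (abs_nonneg c)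
  · rw [abs_mul]; exact mul_le_mul_of_nonneg_left (h3 s).2 (abs_nonneg c)

/-- The logistic loss has `|ℓ'| ≤ 1` and `|ℓ''| ≤ 1/4`, whence the chain rule gives
`|(ℓ ∘ q)''| ≤ |q'|² / 4 + |q''|`. -/
lemma C2Bound.logistic {q a b : ℝ → ℝ} (h : C2Bound q a b) :
    C2Bound (fun s => Real.log (1 + Real.exp (-q s))) a (fun s => a s ^ 2 / 4 + b s) := by
  obtain ⟨q1, q2, h1, h2, h3⟩ := h
  have hE : ∀ s, HasDerivAt (fun s => Real.exp (-q s)) (Real.exp (-q s) * -q1 s) s :=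
    fun s => (h1 s).fun_neg.exp
  have hpos : ∀ s, 0 < 1 + Real.exp (-q s) := fun s => by positivity
  refine ⟨fun s => Real.exp (-q s) * -q1 s / (1 + Real.exp (-q s)),
    fun s => Real.exp (-q s) / (1 + Real.exp (-q s)) ^ 2 * q1 s ^ 2
      - Real.exp (-q s) / (1 + Real.exp (-q s)) * q2 s, fun s => ?_, fun s => ?_, fun s => ?_⟩
  · exact ((hE s).const_add 1).log (hpos s).ne'
  · have := ((hE s).fun_mul (h2 s).fun_neg).fun_div ((hE s).const_add 1) (hpos s).ne'
    refine this.congr_deriv ?_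
    have := (hpos s).ne'
    field_simp
    ring
  · have he : 0 < Real.exp (-q s) := Real.exp_pos _
    set e := Real.exp (-q s)
    have hr : e / (1 + e) ≤ 1 := by rw [div_le_one (by positivity)]; linarith
    have hr0 : 0 ≤ e / (1 + e) := by positivity
    have hr' : e / (1 + e) ^ 2 ≤ 1 / 4 := by
      rw [div_le_div_iff₀ (by positivity) (by norm_num)]; nlinarith [sq_nonneg (1 - e)]
    have hr0' : 0 ≤ e / (1 + e) ^ 2 := by positivity
    obtain ⟨ha, hb⟩ := h3 s
    constructor
    · have : e * -q1 s / (1 + e) = -(e / (1 + e) * q1 s) := by ring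
      change |e * -q1 s / (1 + e)| ≤ a s
      rw [this, abs_neg, abs_mul, abs_of_nonneg hr0]
      nlinarith [abs_nonneg (q1 s)]
    · refine (abs_sub _ _).trans ?_
      rw [abs_mul, abs_mul, abs_of_nonneg hr0, abs_of_nonneg hr0', abs_of_nonneg (sq_nonneg (q1 s))]
      have : q1 s ^ 2 ≤ a s ^ 2 := sq_le_sq' (abs_le.1 ha).1 (abs_le.1 ha).2
      have h4 : e / (1 + e) ^ 2 * q1 s ^ 2 ≤ 1 / 4 * q1 s ^ 2 :=
        mul_le_mul_of_nonneg_right hr' (sq_nonneg _)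
      have h5 : e / (1 + e) * |q2 s| ≤ 1 * |q2 s| :=
        mul_le_mul_of_nonneg_right hr (abs_nonneg _)
      linarith

/-- Second-order Taylor bound on `[0, 1]`. -/
lemma C2Bound.taylor {g a b : ℝ → ℝ} {M : ℝ} (h : C2Bound g a b)
    (hM : ∀ s ∈ Set.Icc (0 : ℝ) 1, b s ≤ M) : g 1 ≤ g 0 + deriv g 0 + M / 2 := by
  obtain ⟨g1, g2, h1, h2, h3⟩ := h
  rw [(h1 0).deriv]
  have hk2 : ∀ s, HasDerivAt (fun s => g1 s - M * s) (g2 s - M * 1) s := fun s =>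
    (h2 s).fun_sub ((hasDerivAt_id' s).const_mul M)
  have A : AntitoneOn (fun s => g1 s - M * s) (Set.Icc 0 1) := by
    refine antitoneOn_of_deriv_nonpos (convex_Icc 0 1)
      (fun s _ => (hk2 s).continuousAt.continuousWithinAt)
      (fun s _ => (hk2 s).differentiableAt.differentiableWithinAt) fun s hs => ?_
    rw [(hk2 s).deriv]
    rw [interior_Icc] at hs
    have := hM s (Set.Ioo_subset_Icc_self hs)
    linarith [(abs_le.1 (h3 s).2).2]
  have hk1 : ∀ s, HasDerivAt (fun s => g s - g1 0 * s - M / 2 * s ^ 2)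
      (g1 s - g1 0 * 1 - M / 2 * (2 * s)) s := fun s => by
    refine ((h1 s).fun_sub ((hasDerivAt_id' s).const_mul (g1 0))).fun_sub ?_
    simpa using (hasDerivAt_pow 2 s).const_mul (M / 2)
  have B : AntitoneOn (fun s => g s - g1 0 * s - M / 2 * s ^ 2) (Set.Icc 0 1) := by
    refine antitoneOn_of_deriv_nonpos (convex_Icc 0 1)
      (fun s _ => (hk1 s).continuousAt.continuousWithinAt)
      (fun s _ => (hk1 s).differentiableAt.differentiableWithinAt) fun s hs => ?_
    rw [(hk1 s).deriv]
    rw [interior_Icc] at hs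
    have := A (Set.left_mem_Icc.2 zero_le_one) (Set.Ioo_subset_Icc_self hs) hs.1.le
    simp only [mul_zero, sub_zero] at this
    linarith
  have := B (Set.left_mem_Icc.2 zero_le_one) (Set.right_mem_Icc.2 zero_le_one) zero_le_one
  simp only [mul_zero, sub_zero, mul_one, one_pow] at this
  norm_num at this
  linarith

/-! ### Softmax along a line -/

lemma abs_sum_prob_le {ι : Type*} [Fintype ι] {p e : ι → ℝ} {E : ℝ} (hp : ∀ i, 0 ≤ p i)
    (h1 : ∑ i, p i = 1) (he : ∀ i, |e i| ≤ E) : |∑ i, p i * e i| ≤ E := by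
  calc |∑ i, p i * e i| ≤ ∑ i, |p i * e i| := abs_sum_le_sum_abs _ _
    _ ≤ ∑ i, p i * E := sum_le_sum fun i _ => by
        rw [abs_mul, abs_of_nonneg (hp i)]; exact mul_le_mul_of_nonneg_left (he i) (hp i)
    _ = E := by rw [← sum_mul, h1, one_mul]

lemma smax_nonneg {T : ℕ} (v : Fin T → ℝ) (t : Fin T) : 0 ≤ smax v t :=
  div_nonneg (Real.exp_pos _).le (sum_nonneg fun _ _ => (Real.exp_pos _).le)

lemma smax_sum {T : ℕ} [Nonempty (Fin T)] (v : Fin T → ℝ) : ∑ t, smax v t = 1 := by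
  unfold smax
  rw [← sum_div]
  exact div_self (sum_pos (fun _ _ => Real.exp_pos _) univ_nonempty).ne'

lemma smax_line_hasDerivAt {T : ℕ} [Nonempty (Fin T)] (a z : Fin T → ℝ) (i : Fin T) (s : ℝ) :
    HasDerivAt (fun s => smax (fun j => a j + s * z j) i)
      (smax (fun j => a j + s * z j) i *
        (z i - ∑ j, smax (fun j => a j + s * z j) j * z j)) s := by
  have hw : ∀ j, HasDerivAt (fun s => Real.exp (a j + s * z j))
      (Real.exp (a j + s * z j) * z j) s := fun j => by
    have : HasDerivAt (fun s => a j + s * z j) (z j) s := by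
      simpa using ((hasDerivAt_id' s).mul_const (z j)).const_add (a j)
    exact this.exp
  have hS : HasDerivAt (fun s => ∑ j, Real.exp (a j + s * z j))
      (∑ j, Real.exp (a j + s * z j) * z j) s := HasDerivAt.fun_sum fun j _ => hw j
  have hne : ∑ j, Real.exp (a j + s * z j) ≠ 0 :=
    (sum_pos (fun _ _ => Real.exp_pos _) univ_nonempty).ne'
  refine ((hw i).fun_div hS hne).congr_deriv ?_
  unfold smax
  simp only [div_mul_eq_mul_div, ← sum_div]
  field_simp

/-- Derivative bounds for a softmax average `∑ᵢ pᵢ(s) (bᵢ + s cᵢ)` along a line. With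
`z̄ = ∑ pᵢ zᵢ` and `p' = p (z - z̄)`, the second derivative is
`2 ∑ pᵢ (zᵢ - z̄) cᵢ + ∑ pᵢ ((zᵢ - z̄)² - Var z) (bᵢ + s cᵢ)`. -/
lemma smax_C2Bound {T : ℕ} [Nonempty (Fin T)] (a z b c : Fin T → ℝ) {B C : ℝ} {D : ℝ → ℝ}
    (hz : ∀ i, |z i| ≤ B) (hc : ∀ i, |c i| ≤ C) (hb : ∀ s i, |b i + s * c i| ≤ D s) :
    C2Bound (fun s => ∑ i, smax (fun j => a j + s * z j) i * (b i + s * c i))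
      (fun s => C + 2 * B * D s) (fun s => 4 * B * C + 4 * B ^ 2 * D s) := by
  set p : Fin T → ℝ → ℝ := fun i s => smax (fun j => a j + s * z j) i with hp
  set zb : ℝ → ℝ := fun s => ∑ j, p j s * z j with hzb
  set zv : ℝ → ℝ := fun s => ∑ j, p j s * (z j - zb s) * z j with hzv
  have hpd : ∀ i s, HasDerivAt (p i) (p i s * (z i - zb s)) s := fun i s =>
    smax_line_hasDerivAt a z i s
  have hzd : ∀ s, HasDerivAt zb (zv s) s := fun s =>
    HasDerivAt.fun_sum fun j _ => (hpd j s).mul_const (z j)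
  have hl : ∀ i s, HasDerivAt (fun s => b i + s * c i) (c i) s := fun i s => by
    simpa using ((hasDerivAt_id' s).mul_const (c i)).const_add (b i)
  have p0 : ∀ s i, 0 ≤ p i s := fun s i => smax_nonneg _ _
  have p1 : ∀ s, ∑ i, p i s = 1 := fun s => smax_sum _
  have hB : 0 ≤ B := (abs_nonneg _).trans (hz (Classical.arbitrary _))
  have hzb' : ∀ s, |zb s| ≤ B := fun s => abs_sum_prob_le (p0 s) (p1 s) hz
  have hdz : ∀ s i, |z i - zb s| ≤ 2 * B := fun s i =>
    (abs_sub _ _).trans (by linarith [hz i, hzb' s])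
  have hzv_eq : ∀ s, zv s = ∑ j, p j s * (z j - zb s) ^ 2 := fun s => by
    -- the two sides differ by `z̄ ∑ pⱼ (zⱼ - z̄) = 0`
    have h0 : ∑ j, p j s * (z j - zb s) = 0 := by
      simp only [mul_sub, sum_sub_distrib, ← sum_mul, p1]
      simp [hzb]
    have : zv s - ∑ j, p j s * (z j - zb s) ^ 2 = (∑ j, p j s * (z j - zb s)) * zb s := by
      rw [hzv, sum_mul, ← sum_sub_distrib]
      exact sum_congr rfl fun j _ => by ring
    rw [h0] at this; linarith
  have hsq : ∀ s i, (z i - zb s) ^ 2 ≤ 4 * B ^ 2 := fun s i => by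
    have := abs_le.1 (hdz s i)
    nlinarith
  have hzv0 : ∀ s, 0 ≤ zv s := fun s => by
    rw [hzv_eq]; exact sum_nonneg fun j _ => mul_nonneg (p0 s j) (sq_nonneg _)
  have hzv1 : ∀ s, zv s ≤ 4 * B ^ 2 := fun s => by
    rw [hzv_eq]
    exact (le_abs_self _).trans (abs_sum_prob_le (p0 s) (p1 s) fun i => by
      rw [abs_of_nonneg (sq_nonneg _)]; exact hsq s i)
  refine ⟨fun s => ∑ i, (p i s * (z i - zb s) * (b i + s * c i) + p i s * c i),
    fun s => ∑ i, (((p i s * (z i - zb s)) * (z i - zb s) + p i s * (-zv s)) * (b i + s * c i)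
      + p i s * (z i - zb s) * c i + p i s * (z i - zb s) * c i), fun s => ?_, fun s => ?_,
    fun s => ⟨?_, ?_⟩⟩
  · exact HasDerivAt.fun_sum fun i _ => (hpd i s).fun_mul (hl i s)
  · refine HasDerivAt.fun_sum fun i _ => ?_
    exact (((hpd i s).fun_mul ((hzd s).const_sub (z i))).fun_mul (hl i s)).fun_add
      ((hpd i s).mul_const (c i))
  · have : ∑ i, (p i s * (z i - zb s) * (b i + s * c i) + p i s * c i) =
        ∑ i, p i s * ((z i - zb s) * (b i + s * c i) + c i) := sum_congr rfl fun i _ => by ring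
    beta_reduce
    rw [this]
    refine abs_sum_prob_le (p0 s) (p1 s) fun i => (abs_add_le _ _).trans ?_
    rw [abs_mul]
    have := mul_le_mul (hdz s i) (hb s i) (abs_nonneg _) (by positivity)
    linarith [hc i]
  · have : ∑ i, (((p i s * (z i - zb s)) * (z i - zb s) + p i s * (-zv s)) * (b i + s * c i)
        + p i s * (z i - zb s) * c i + p i s * (z i - zb s) * c i) =
        ∑ i, p i s * (2 * ((z i - zb s) * c i) + ((z i - zb s) ^ 2 - zv s) * (b i + s * c i)) :=
      sum_congr rfl fun i _ => by ring
    beta_reduce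
    rw [this]
    refine abs_sum_prob_le (p0 s) (p1 s) fun i => (abs_add_le _ _).trans ?_
    rw [abs_mul, abs_mul, abs_mul, abs_two]
    have e1 := mul_le_mul (hdz s i) (hc i) (abs_nonneg _) (by positivity)
    have e0 : |(z i - zb s) ^ 2 - zv s| ≤ 4 * B ^ 2 := abs_le.2
      ⟨by nlinarith [hzv1 s, sq_nonneg (z i - zb s)], by linarith [hzv0 s, hsq s i]⟩
    have e2 := mul_le_mul e0 (hb s i) (abs_nonneg _) (by positivity)
    linarith

/-! ### One attention head along a line -/

lemma abs_sum_mul_le_sqrt {ι : Type*} (S : Finset ι) (f g : ι → ℝ) :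
    |∑ i ∈ S, f i * g i| ≤ √(∑ i ∈ S, f i ^ 2) * √(∑ i ∈ S, g i ^ 2) := by
  rw [← Real.sqrt_mul (sum_nonneg fun _ _ => sq_nonneg _)]
  exact Real.abs_le_sqrt (sum_mul_sq_le_sq_mul_sq S f g)

/-- Frobenius norm. -/
noncomputable def frob {m n : ℕ} (A : Fin m → Fin n → ℝ) : ℝ := √(∑ i, ∑ j, A i j ^ 2)

lemma frob_nonneg {m n : ℕ} (A : Fin m → Fin n → ℝ) : 0 ≤ frob A := Real.sqrt_nonneg _

lemma frob_sq {m n : ℕ} (A : Fin m → Fin n → ℝ) : frob A ^ 2 = ∑ i, ∑ j, A i j ^ 2 :=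
  Real.sq_sqrt (sum_nonneg fun _ _ => sum_nonneg fun _ _ => sq_nonneg _)

lemma sum_row_norm_le {m n : ℕ} (A : Fin m → Fin n → ℝ) :
    ∑ i, √(∑ j, A i j ^ 2) ≤ √m * frob A := by
  have := abs_sum_mul_le_sqrt univ (fun _ : Fin m => (1 : ℝ)) fun i => √(∑ j, A i j ^ 2)
  have h : ∀ i, √(∑ j, A i j ^ 2) ^ 2 = ∑ j, A i j ^ 2 := fun i =>
    Real.sq_sqrt (sum_nonneg fun _ _ => sq_nonneg _)
  simp only [one_mul, one_pow, sum_const, card_univ, Fintype.card_fin, nsmul_eq_mul, mul_one, h]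
    at this
  exact (le_abs_self _).trans this

lemma abs_score_le {T d : ℕ} {X : Fin T → Fin d → ℝ} {R : ℝ}
    (hX : ∀ t, √(∑ j, X t j ^ 2) ≤ R) (Z : Fin d → Fin d → ℝ) (t s : Fin T) :
    |attnScores X Z t s| ≤ R ^ 2 * frob Z := by
  have h := abs_sum_mul_le_sqrt (univ ×ˢ univ)
    (fun q : Fin d × Fin d => X t q.1 * X s q.2) (fun q => Z q.1 q.2)
  simp only [sum_product] at h
  have e1 : attnScores X Z t s = ∑ j, ∑ k, X t j * X s k * Z j k :=
    sum_congr rfl fun j _ => sum_congr rfl fun k _ => by ring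
  have e2 : ∑ j, ∑ k, (X t j * X s k) ^ 2 = (∑ j, X t j ^ 2) * ∑ k, X s k ^ 2 := by
    rw [sum_mul_sum]; simp only [mul_pow]
  rw [e2, Real.sqrt_mul (sum_nonneg fun _ _ => sq_nonneg _)] at h
  rw [e1]
  refine h.trans (mul_le_mul_of_nonneg_right ?_ (frob_nonneg Z))
  rw [sq]
  exact mul_le_mul (hX t) (hX s) (Real.sqrt_nonneg _) ((Real.sqrt_nonneg _).trans (hX t))

lemma abs_value_le {T d : ℕ} {X : Fin T → Fin d → ℝ} {R : ℝ}
    (hX : ∀ t, √(∑ j, X t j ^ 2) ≤ R) (U : Fin T → Fin d → ℝ) (t s : Fin T) :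
    |∑ j, U t j * X s j| ≤ R * √(∑ j, U t j ^ 2) := by
  rw [mul_comm R]
  exact (abs_sum_mul_le_sqrt _ _ _).trans
    (mul_le_mul_of_nonneg_left (hX s) (Real.sqrt_nonneg _))

/-- One head along the line with direction `(V, Z)`: the token-wise softmax bounds are summed
over `t` by Cauchy–Schwarz, which produces the factor `√T`. -/
lemma attnPhi_C2Bound {T d : ℕ} {X : Fin T → Fin d → ℝ} {R : ℝ} (hR : 0 ≤ R)
    (hX : ∀ t, √(∑ j, X t j ^ 2) ≤ R) (U V : Fin T → Fin d → ℝ) (W Z : Fin d → Fin d → ℝ) :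
    C2Bound (fun s => attnPhi X (fun t j => U t j + s * V t j) (fun j k => W j k + s * Z j k))
      (fun s => √T * R * (frob V + 2 * R ^ 2 * frob Z * frob (fun t j => U t j + s * V t j)))
      (fun s => √T * R ^ 3 * (4 * frob Z * frob V
        + 4 * R ^ 2 * frob Z ^ 2 * frob (fun t j => U t j + s * V t j))) := by
  have key : ∀ t : Fin T, C2Bound
      (fun s => ∑ i, smax (fun i => attnScores X W t i + s * attnScores X Z t i) i *
        (∑ j, U t j * X i j + s * ∑ j, V t j * X i j))
      (fun s => R * √(∑ j, V t j ^ 2)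
        + 2 * (R ^ 2 * frob Z) * (R * √(∑ j, (U t j + s * V t j) ^ 2)))
      (fun s => 4 * (R ^ 2 * frob Z) * (R * √(∑ j, V t j ^ 2))
        + 4 * (R ^ 2 * frob Z) ^ 2 * (R * √(∑ j, (U t j + s * V t j) ^ 2))) := fun t => by
    have : Nonempty (Fin T) := ⟨t⟩
    refine smax_C2Bound _ _ _ _ (fun i => abs_score_le hX Z t i)
      (fun i => abs_value_le hX V t i) fun s i => ?_
    have := abs_value_le hX (fun t j => U t j + s * V t j) t i
    convert this using 2
    rw [mul_sum, ← sum_add_distrib]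
    exact sum_congr rfl fun j _ => by ring
  have h := C2Bound.sum key
  have e : (fun s => ∑ t, ∑ i, smax (fun i => attnScores X W t i + s * attnScores X Z t i) i *
        (∑ j, U t j * X i j + s * ∑ j, V t j * X i j)) =
      fun s => attnPhi X (fun t j => U t j + s * V t j) (fun j k => W j k + s * Z j k) := by
    funext s
    unfold attnPhi
    refine sum_congr rfl fun t _ => sum_congr rfl fun i _ => ?_
    congr 1
    · congr 1
      funext i
      unfold attnScores
      simp only [mul_sum, ← sum_add_distrib]
      exact sum_congr rfl fun j _ => sum_congr rfl fun k _ => by ring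
    · rw [mul_sum, ← sum_add_distrib]
      exact sum_congr rfl fun j _ => by ring
  rw [e] at h
  have hZ := frob_nonneg Z
  refine h.mono (fun s => ?_) (fun s => ?_)
  · have r1 := sum_row_norm_le V
    have r2 := sum_row_norm_le fun t j => U t j + s * V t j
    rw [sum_add_distrib, ← mul_sum, ← mul_sum, ← mul_sum]
    calc _ ≤ R * (√T * frob V) + 2 * (R ^ 2 * frob Z) *
          (R * (√T * frob (fun t j => U t j + s * V t j))) := by gcongr
      _ = _ := by ring
  · have r1 := sum_row_norm_le V
    have r2 := sum_row_norm_le fun t j => U t j + s * V t j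
    rw [sum_add_distrib, ← mul_sum, ← mul_sum, ← mul_sum, ← mul_sum]
    calc _ ≤ 4 * (R ^ 2 * frob Z) * (R * (√T * frob V)) + 4 * (R ^ 2 * frob Z) ^ 2 *
          (R * (√T * frob (fun t j => U t j + s * V t j))) := by gcongr
      _ = _ := by ring

/-! ### The multi-head model and the empirical risk along a line -/

/-- The parameter vector `θ_h` of one head. -/
noncomputable def headVec {T d H : ℕ} (θ : Params T d H) (h : Fin H) :
    EuclideanSpace ℝ (HeadIx T d) := WithLp.toLp 2 fun p => θ (h, p)

lemma headVec_norm {T d H : ℕ} (θ : Params T d H) (h : Fin H) :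
    ‖headVec θ h‖ = √(∑ p : HeadIx T d, θ (h, p) ^ 2) := by
  simp [EuclideanSpace.norm_eq, headVec]

lemma headVec_le_max {T d H : ℕ} (θ : Params T d H) (h : Fin H) :
    ‖headVec θ h‖ ≤ maxHeadNorm θ := by
  rw [headVec_norm]
  exact le_ciSup (f := fun h : Fin H => √(∑ p : HeadIx T d, θ (h, p) ^ 2))
    (Set.finite_range _).bddAbove h

lemma maxHeadNorm_nonneg {T d H : ℕ} (θ : Params T d H) : 0 ≤ maxHeadNorm θ :=
  Real.iSup_nonneg fun _ => Real.sqrt_nonneg _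

lemma sum_headVec_sq {T d H : ℕ} (θ : Params T d H) : ∑ h, ‖headVec θ h‖ ^ 2 = ‖θ‖ ^ 2 := by
  simp [EuclideanSpace.norm_sq_eq, headVec, Fintype.sum_prod_type, Fintype.sum_sum_type]

lemma headVec_sq {T d H : ℕ} (θ : Params T d H) (h : Fin H) :
    ‖headVec θ h‖ ^ 2 = frob (headU θ h) ^ 2 + frob (headW θ h) ^ 2 := by
  rw [frob_sq, frob_sq]
  simp [EuclideanSpace.norm_sq_eq, headVec, Fintype.sum_prod_type, headU, headW]

/-- `‖·‖_{2,∞}` is convex, hence bounded on a segment by the larger endpoint value. -/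
lemma maxHeadNorm_segment {T d H : ℕ} (θ v : Params T d H) {s : ℝ} (hs : s ∈ Set.Icc (0 : ℝ) 1) :
    maxHeadNorm (θ + s • v) ≤ max (maxHeadNorm θ) (maxHeadNorm (θ + v)) := by
  refine Real.iSup_le (fun h => ?_) ((maxHeadNorm_nonneg θ).trans (le_max_left _ _))
  rw [← headVec_norm]
  have e : headVec (θ + s • v) h = (1 - s) • headVec θ h + s • headVec (θ + v) h := by
    ext p; simp [headVec]; ring
  have h1 := (headVec_le_max θ h).trans (le_max_left _ (maxHeadNorm (θ + v)))
  have h2 := (headVec_le_max (θ + v) h).trans (le_max_right (maxHeadNorm θ) _)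
  calc ‖headVec (θ + s • v) h‖ ≤ ‖(1 - s) • headVec θ h‖ + ‖s • headVec (θ + v) h‖ := by
        rw [e]; exact norm_add_le _ _
    _ = (1 - s) * ‖headVec θ h‖ + s * ‖headVec (θ + v) h‖ := by
        rw [norm_smul, norm_smul, Real.norm_of_nonneg hs.1,
          Real.norm_of_nonneg (sub_nonneg.2 hs.2)]
    _ ≤ _ := by nlinarith [hs.1, hs.2]

lemma beta2_mono {T d H : ℕ} {R : ℝ} (hR : 0 ≤ R) {θ θ' : Params T d H}
    (h : maxHeadNorm θ ≤ maxHeadNorm θ') : beta2 R θ ≤ beta2 R θ' := by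
  have := maxHeadNorm_nonneg θ
  unfold beta2 beta1 beta3
  gcongr

/-- Each head's constants satisfy `frob V, frob Z ≤ ‖v_h‖` and `2 frob V frob Z ≤ ‖v_h‖²`. The
heads are then combined by `(∑_h ‖v_h‖)/√H ≤ ‖v‖` and `∑_h ‖v_h‖² = ‖v‖²`. -/
lemma mhPhi_C2Bound {T d H : ℕ} (hd : 1 ≤ d) {X : Fin T → Fin d → ℝ} {R : ℝ} (hR : 0 ≤ R)
    (hX : ∀ t, √(∑ j, X t j ^ 2) ≤ R) (θ v : Params T d H) :
    C2Bound (fun s => mhPhi X (θ + s • v)) (fun s => beta1 R (θ + s • v) * ‖v‖)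
      (fun s => beta3 R (θ + s • v) / √H * ‖v‖ ^ 2) := by
  have key : ∀ h : Fin H, C2Bound
      (fun s => attnPhi X (headU (θ + s • v) h) (headW (θ + s • v) h))
      (fun s => beta1 R (θ + s • v) * ‖headVec v h‖)
      (fun s => beta3 R (θ + s • v) * ‖headVec v h‖ ^ 2) := fun h => by
    refine (attnPhi_C2Bound hR hX (headU θ h) (headU v h) (headW θ h) (headW v h)).mono
      (fun s => ?_) (fun s => ?_)
    all_goals
      have hU : frob (fun t j => headU θ h t j + s * headU v h t j) ≤
          maxHeadNorm (θ + s • v) := by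
        refine le_trans ?_ (headVec_le_max (θ + s • v) h)
        refine (sq_le_sq₀ (frob_nonneg _) (norm_nonneg _)).1 ?_
        rw [headVec_sq]
        exact le_add_of_nonneg_right (sq_nonneg _)
      have hsq := headVec_sq v h
      have hV0 := frob_nonneg (headU v h)
      have hZ0 := frob_nonneg (headW v h)
      have hV : frob (headU v h) ≤ ‖headVec v h‖ :=
        (sq_le_sq₀ (frob_nonneg _) (norm_nonneg _)).1 (by nlinarith)
      have hZ : frob (headW v h) ≤ ‖headVec v h‖ :=
        (sq_le_sq₀ (frob_nonneg _) (norm_nonneg _)).1 (by nlinarith)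
      have hK := maxHeadNorm_nonneg (θ + s • v)
      have hU0 := frob_nonneg fun t j => headU θ h t j + s * headU v h t j
    · calc _ ≤ √T * R * (‖headVec v h‖ + 2 * R ^ 2 * ‖headVec v h‖ * maxHeadNorm (θ + s • v)) := by
            gcongr
        _ = _ := by unfold beta1; ring
    · have hd1 : (1 : ℝ) ≤ d := by exact_mod_cast hd
      have hsd : 1 ≤ √(d : ℝ) := Real.one_le_sqrt.2 hd1
      calc _ ≤ √T * R ^ 3 * (2 * ‖headVec v h‖ ^ 2
              + 4 * R ^ 2 * ‖headVec v h‖ ^ 2 * maxHeadNorm (θ + s • v)) := by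
            have : 4 * frob (headW v h) * frob (headU v h) ≤ 2 * ‖headVec v h‖ ^ 2 := by
              nlinarith [sq_nonneg (frob (headU v h) - frob (headW v h))]
            gcongr
        _ = 2 * 1 * (√T * 1) * R ^ 3 * (2 * 1 * R ^ 2 * maxHeadNorm (θ + s • v) + 1)
              * ‖headVec v h‖ ^ 2 := by ring
        _ ≤ 2 * d * (√T * √d) * R ^ 3 * (3 * √d * R ^ 2 * maxHeadNorm (θ + s • v) + 1)
              * ‖headVec v h‖ ^ 2 := by
            gcongr; norm_num
        _ = _ := by unfold beta3; rw [Real.sqrt_mul (Nat.cast_nonneg T)]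
  refine ((C2Bound.sum key).const_mul (1 / √H)).mono (fun s => ?_) (fun s => ?_)
  · have hcs := abs_sum_mul_le_sqrt univ (fun _ : Fin H => (1 : ℝ)) fun h => ‖headVec v h‖
    simp only [one_mul, one_pow, sum_const, card_univ, Fintype.card_fin, nsmul_eq_mul, mul_one,
      sum_headVec_sq, Real.sqrt_sq (norm_nonneg v)] at hcs
    have hb : 0 ≤ beta1 R (θ + s • v) := by
      have := maxHeadNorm_nonneg (θ + s • v)
      unfold beta1; positivity
    have h1 : 1 / √(H : ℝ) * √H ≤ 1 := by
      rw [one_div]; exact inv_mul_le_one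
    rw [← mul_sum, abs_of_nonneg (by positivity)]
    calc _ ≤ 1 / √(H : ℝ) * (beta1 R (θ + s • v) * (√H * ‖v‖)) := by
          gcongr; exact (le_abs_self _).trans hcs
      _ = (1 / √(H : ℝ) * √H) * (beta1 R (θ + s • v) * ‖v‖) := by ring
      _ ≤ 1 * (beta1 R (θ + s • v) * ‖v‖) := by gcongr
      _ = _ := one_mul _
  · rw [← mul_sum, sum_headVec_sq, abs_of_nonneg (by positivity)]
    exact le_of_eq (by ring)

lemma empLoss_C2Bound {T d H n : ℕ} (hd : 1 ≤ d) (hn : 0 < n)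
    {X : Fin n → Fin T → Fin d → ℝ} {y : Fin n → ℝ} {R : ℝ} (hdata : BoundedData X y R)
    (θ v : Params T d H) :
    C2Bound (fun s => empLoss X y (θ + s • v)) (fun s => beta1 R (θ + s • v) * ‖v‖)
      (fun s => beta2 R (θ + s • v) * ‖v‖ ^ 2) := by
  obtain ⟨hR, hy, hX⟩ := hdata
  have key : ∀ i, C2Bound
      (fun s => Real.log (1 + Real.exp (-(y i * mhPhi (X i) (θ + s • v)))))
      (fun s => beta1 R (θ + s • v) * ‖v‖) (fun s => beta2 R (θ + s • v) * ‖v‖ ^ 2) := fun i => by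
    have hyi : |y i| = 1 := by rcases hy i with h | h <;> simp [h]
    have h := ((mhPhi_C2Bound hd (zero_le_one.trans hR) (hX i) θ v).const_mul (y i)).logistic
    simp only [hyi, one_mul] at h
    exact h.mono (fun s => le_rfl) fun s => le_of_eq (by unfold beta2; ring)
  have hn' : (n : ℝ) ≠ 0 := by exact_mod_cast hn.ne'
  refine ((C2Bound.sum key).const_mul (1 / (n : ℝ))).mono (fun s => ?_) (fun s => ?_) <;>
  · rw [abs_of_nonneg (by positivity)]
    simp only [sum_const, card_univ, Fintype.card_fin, nsmul_eq_mul]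
    exact le_of_eq (by field_simp)

lemma empLoss_differentiable {T d H n : ℕ} (X : Fin n → Fin T → Fin d → ℝ) (y : Fin n → ℝ) :
    Differentiable ℝ (empLoss X y : Params T d H → ℝ) := by
  have hS : ∀ i (h : Fin H) (t s : Fin T), Differentiable ℝ
      (fun θ : Params T d H => smax (attnScores (X i) (headW θ h) t) s) := fun i h t s => by
    have hne : ∀ θ : Params T d H,
        ∑ r, Real.exp (attnScores (X i) (headW θ h) t r) ≠ 0 := fun θ =>
      (sum_pos (fun _ _ => Real.exp_pos _) ⟨t, mem_univ t⟩).ne'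
    simp only [smax, div_eq_mul_inv]
    refine Differentiable.fun_mul ?_ (Differentiable.fun_inv ?_ hne) <;> unfold attnScores headW <;> fun_prop
  have hΦ : ∀ i, Differentiable ℝ (fun θ : Params T d H => mhPhi (X i) θ) := fun i => by
    unfold mhPhi attnPhi headU
    fun_prop
  have hlog : ∀ i, Differentiable ℝ (fun θ : Params T d H =>
      Real.log (1 + Real.exp (-(y i * mhPhi (X i) θ)))) := fun i =>
    Differentiable.log (by fun_prop) fun θ => by positivity
  unfold empLoss
  fun_prop

/-- **Descent lemma.** Under the bounded-data assumption, for any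
iteration `k ≥ 0` of gradient descent on the logistic empirical risk, if the step
size satisfies `η ≤ 1/ρ_k` with `ρ_k = max{β₂(θ̃^(k)), β₂(θ̃^(k+1))}`, then
`L̂(θ̃^(k+1)) ≤ L̂(θ̃^(k)) − (η/2) ‖∇L̂(θ̃^(k))‖²`. -/
theorem descent_lemma {T d H n : ℕ} (hn : 0 < n)
    (X : Fin n → Fin T → Fin d → ℝ) (y : Fin n → ℝ) (R : ℝ)
    (hdata : BoundedData X y R)
    (η : ℝ) (hη : 0 < η)
    (θseq : ℕ → Params T d H)
    (hstep : ∀ k, θseq (k + 1) = θseq k - η • gradient (empLoss X y) (θseq k))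
    (k : ℕ)
    (hηk : η ≤ 1 / max (beta2 R (θseq k)) (beta2 R (θseq (k + 1)))) :
    empLoss X y (θseq (k + 1)) ≤
      empLoss X y (θseq k) - η / 2 * ‖gradient (empLoss X y) (θseq k)‖ ^ 2 := by
  obtain ⟨hR, -, -⟩ := id hdata
  rcases Nat.eq_zero_or_pos d with rfl | hd
  · -- without features the parameter space is a point
    have h0 : gradient (empLoss X y) (θseq k) = 0 := Subsingleton.elim _ _
    simp [hstep k, h0]
  set G := gradient (empLoss X y) (θseq k) with hG
  set v := -(η • G) with hv
  have hnext : θseq (k + 1) = θseq k + v := by rw [hstep k, hv, sub_eq_add_neg]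
  rw [hnext] at hηk ⊢
  set ρ := max (beta2 R (θseq k)) (beta2 R (θseq k + v)) with hρ
  -- `0 < η ≤ 1 / ρ` excludes `ρ ≤ 0`, including the junk value `1 / 0 = 0`
  have hρ0 : 0 < ρ := one_div_pos.1 (hη.trans_le hηk)
  have hηρ : η * ρ ≤ 1 := (le_div_iff₀ hρ0).1 hηk
  have hseg : ∀ s ∈ Set.Icc (0 : ℝ) 1, beta2 R (θseq k + s • v) * ‖v‖ ^ 2 ≤ ρ * ‖v‖ ^ 2 := by
    intro s hs
    refine mul_le_mul_of_nonneg_right ?_ (sq_nonneg _)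
    rcases le_max_iff.1 (maxHeadNorm_segment (θseq k) v hs) with h | h
    · exact (beta2_mono (by linarith) h).trans (le_max_left _ _)
    · exact (beta2_mono (by linarith) h).trans (le_max_right _ _)
  have htaylor := (empLoss_C2Bound hd hn hdata (θseq k) v).taylor hseg
  have hder : deriv (fun s : ℝ => empLoss X y (θseq k + s • v)) 0 = -(η * ‖G‖ ^ 2) := by
    have hg := (empLoss_differentiable X y (θseq k)).hasGradientAt.hasFDerivAt
    have hline : HasDerivAt (fun s : ℝ => θseq k + s • v) v 0 := by
      simpa using ((hasDerivAt_id' (0 : ℝ)).smul_const v).const_add (θseq k)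
    have hcomp := HasFDerivAt.comp_hasDerivAt_of_eq (0 : ℝ) hg hline (by simp)
    refine hcomp.deriv.trans ?_
    rw [InnerProductSpace.toDual_apply_apply, ← hG, hv, inner_neg_right, real_inner_smul_right,
      real_inner_self_eq_norm_sq]
  have hnv : ‖v‖ ^ 2 = η ^ 2 * ‖G‖ ^ 2 := by
    rw [hv, norm_neg, norm_smul, mul_pow, Real.norm_eq_abs, sq_abs]
  simp only [one_smul, zero_smul, add_zero] at htaylor
  rw [hder, hnv] at htaylor
  have : ρ * (η ^ 2 * ‖G‖ ^ 2) ≤ η * ‖G‖ ^ 2 := by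
    have := mul_le_mul_of_nonneg_right hηρ (by positivity : 0 ≤ η * ‖G‖ ^ 2)
    linarith
  linarith
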